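/- Let d ≥ 1, 0 < μ < 2, κ₀ > 0. For every s ∈ ℝ and every n ∈ ℕ there exists C > 0, independent of E, such that for all E ≥ 0 and all x ∈ ℝ^d, the n-th total derivative of the function x ↦ f_E(x)^s satisfies ‖D^n (f_E^s)(x)‖ ≤ C f_E(x)^s ⟨x⟩^{−n} (operator norm of the n-linear map D^n(f_E^s)(x)). Equivalently, f_E^s belongs to the symbol class S_unif(f_E^s, g_E) with seminorms uniform in E. -/

import Mathlib

open Real

noncomputable section

/-- The Japanese bracket `⟨x⟩ = (1+|x|²)^{1/2}`. -/
def jap {d : ℕ} (x : EuclideanSpace ℝ (Fin d)) : ℝ := Real.sqrt (1 + ‖x‖ ^ 2)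

/-- The energy-dependent weight `f_E(x) = (κ₀^{-2}E + (1-μ/2)^{-1}⟨x⟩^{-μ})^{1/2}`. -/
def fE {d : ℕ} (μ κ₀ E : ℝ) (x : EuclideanSpace ℝ (Fin d)) : ℝ :=
  Real.sqrt ((κ₀ ^ 2)⁻¹ * E + (1 - μ/2)⁻¹ * jap x ^ (-μ))

/-- The Hörmander metric `g_{E,(x,ξ)}(v_x,v_ξ) = |v_x|²/⟨x⟩² + |v_ξ|²/f_E(x)²`
(it depends on the base point only through `x`). -/
def gMet {d : ℕ} (μ κ₀ E : ℝ) (x vx vξ : EuclideanSpace ℝ (Fin d)) : ℝ :=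
  ‖vx‖ ^ 2 / jap x ^ 2 + ‖vξ‖ ^ 2 / fE μ κ₀ E x ^ 2

open scoped ContDiff Nat

lemma aux_affine {V : Type*} [NormedAddCommGroup V] [NormedSpace ℝ V] (v : V → ℝ)
    (hv : ContDiff ℝ ∞ v) (a c : ℝ) (i : ℕ) (hi : 1 ≤ i) (x : V) :
    ‖iteratedFDeriv ℝ i (fun y => a + c * v y) x‖ = |c| * ‖iteratedFDeriv ℝ i v x‖ := by
  have hv' : ContDiff ℝ i v := hv.of_le (by exact_mod_cast le_top)
  have h1 : (fun y => a + c * v y) = (fun _ => a) + (c • v) := by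
    ext y; simp
  rw [h1, iteratedFDeriv_add_apply (f := fun _ => a) (g := c • v) contDiff_const.contDiffAt
      (hv'.const_smul c).contDiffAt,
    iteratedFDeriv_const_of_ne (by omega), iteratedFDeriv_const_smul_apply hv'.contDiffAt]
  simp [norm_smul]

lemma aux_rpow_smooth {V : Type*} [NormedAddCommGroup V] [NormedSpace ℝ V] (u : V → ℝ)
    (hu : ContDiff ℝ ∞ u) (hpos : ∀ y, 0 < u y) (r : ℝ) :
    ContDiff ℝ ∞ (fun y => u y ^ r) :=
  hu.rpow_const_of_ne (fun y => (hpos y).ne')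

/-- Powers of a positive symbol are symbols, pointwise version. -/
lemma aux_rpow (r : ℝ) (n : ℕ) (K : ℝ) (hK : 1 ≤ K) :
    ∃ C : ℝ, 1 ≤ C ∧ ∀ {V : Type} [NormedAddCommGroup V] [NormedSpace ℝ V] (u : V → ℝ)
      (_ : ContDiff ℝ ∞ u) (_ : ∀ y, 0 < u y) (x : V) (J : ℝ) (_ : 0 < J)
      (_ : ∀ i, 1 ≤ i → i ≤ n → ‖iteratedFDeriv ℝ i u x‖ ≤ K * u x * J⁻¹ ^ i),
      ‖iteratedFDeriv ℝ n (fun y => u y ^ r) x‖ ≤ C * u x ^ r * J⁻¹ ^ n := by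
  set S : ℝ := ∑ k ∈ Finset.range (n + 1), ‖Polynomial.eval r (descPochhammer ℝ k)‖ with hS
  refine ⟨max 1 (n ! * S * K ^ n), le_max_left _ _, ?_⟩
  intro V _ _ u hu hpos x J hJ hD
  have hux := hpos x
  set h : V → ℝ := fun y => 0 + (u x)⁻¹ * u y with hh
  have hhs : ContDiff ℝ ∞ h := contDiff_const.add (contDiff_const.mul hu)
  have hhx : h x = 1 := by simp [hh, hux.ne']
  have hhpos : ∀ y, 0 < h y := fun y => by
    have := hpos y
    simp only [hh]; positivity
  have ht : Set.range h ⊆ Set.Ioi (0:ℝ) := by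
    rintro _ ⟨y, rfl⟩; exact hhpos y
  have hg : ContDiffOn ℝ ∞ (fun t : ℝ => t ^ r) (Set.Ioi (0:ℝ)) :=
    contDiffOn_fun_id.rpow_const_of_ne fun t ht => (ne_of_gt ht)
  have hunique : UniqueDiffOn ℝ (Set.Ioi (0:ℝ)) := isOpen_Ioi.uniqueDiffOn
  have key := norm_iteratedFDeriv_comp_le' (n := n) ht hunique hg hhs
    (by exact_mod_cast le_top) x (C := S) (D := K * J⁻¹) ?_ ?_
  · have e : (fun y => u y ^ r) = fun y => 0 + u x ^ r * ((fun t : ℝ => t ^ r) ∘ h) y := by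
      ext y
      have hy := hpos y
      simp only [hh, Function.comp, zero_add]
      rw [← Real.mul_rpow hux.le (by positivity)]
      congr 1
      field_simp
    have hle : ‖iteratedFDeriv ℝ n (fun y => u y ^ r) x‖
        = u x ^ r * ‖iteratedFDeriv ℝ n ((fun t : ℝ => t ^ r) ∘ h) x‖ := by
      rcases Nat.eq_zero_or_pos n with h0 | h0
      · subst h0
        rw [norm_iteratedFDeriv_zero, norm_iteratedFDeriv_zero]
        simp [hhx]
        positivity
      · rw [e, aux_affine ((fun t : ℝ => t ^ r) ∘ h) (aux_rpow_smooth h hhs hhpos r) _ _ _ h0,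
          abs_of_pos (by positivity)]
    rw [hle]
    calc _ ≤ u x ^ r * (n ! * S * (K * J⁻¹) ^ n) := by gcongr
      _ = (n ! * S * K ^ n) * u x ^ r * J⁻¹ ^ n := by rw [mul_pow]; ring
      _ ≤ _ := by gcongr; exact le_max_right _ _
  · intro i hi
    have hx1 : h x ∈ Set.Ioi (0:ℝ) := hhpos x
    have : ContDiffAt ℝ i (fun x : ℝ ↦ x ^ r) (h x) :=
      Real.contDiffAt_rpow_const <| Or.inl (hhpos x).ne'
    rw [norm_iteratedFDerivWithin_eq_norm_iteratedDerivWithin,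
      iteratedDerivWithin_eq_iteratedDeriv hunique this hx1, iteratedDeriv_eq_iterate,
      Real.iter_deriv_rpow_const, norm_mul, hhx, Real.one_rpow, norm_one, mul_one]
    have : i ∈ Finset.range (n + 1) := by grind
    exact Finset.single_le_sum (f := fun k => ‖Polynomial.eval r (descPochhammer ℝ k)‖)
      (fun _ _ ↦ by positivity) this
  · intro i hi1 hi
    rw [aux_affine u hu _ _ i hi1, abs_of_pos (by positivity)]
    calc _ ≤ (u x)⁻¹ * (K * u x * J⁻¹ ^ i) := by gcongr; exact hD i hi1 hi
      _ = K * J⁻¹ ^ i := by field_simp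
      _ ≤ K ^ i * J⁻¹ ^ i := by
        gcongr
        exact le_self_pow₀ hK (by omega)
      _ = _ := by rw [mul_pow]

lemma jap_ge_one {d : ℕ} (x : EuclideanSpace ℝ (Fin d)) : 1 ≤ jap x := by
  rw [jap, Real.one_le_sqrt]; nlinarith [sq_nonneg ‖x‖]

lemma jap_sq {d : ℕ} (x : EuclideanSpace ℝ (Fin d)) : jap x ^ 2 = 1 + ‖x‖ ^ 2 := by
  rw [jap, Real.sq_sqrt (by positivity)]

lemma norm_le_jap {d : ℕ} (x : EuclideanSpace ℝ (Fin d)) : ‖x‖ ≤ jap x := by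
  apply Real.le_sqrt_of_sq_le; linarith

lemma aux_id {d : ℕ} (x : EuclideanSpace ℝ (Fin d)) (j : ℕ) :
    ‖iteratedFDeriv ℝ j (fun y : EuclideanSpace ℝ (Fin d) => y) x‖ ≤ jap x * (jap x)⁻¹ ^ j := by
  have hJ := jap_ge_one x
  match j with
  | 0 => simpa [norm_iteratedFDeriv_zero] using norm_le_jap x
  | 1 =>
    have : jap x * (jap x)⁻¹ ^ 1 = 1 := by field_simp
    rw [this, ← norm_iteratedFDeriv_fderiv, norm_iteratedFDeriv_zero, fderiv_fun_id]
    exact ContinuousLinearMap.norm_id_le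
  | (k+2) =>
    rw [← norm_iteratedFDeriv_fderiv]
    have : fderiv ℝ (fun y : EuclideanSpace ℝ (Fin d) => y)
        = fun _ => ContinuousLinearMap.id ℝ _ := by
      ext1 y; exact fderiv_fun_id
    rw [this, iteratedFDeriv_const_of_ne (by omega)]
    simp only [Pi.zero_apply, norm_zero]
    positivity

lemma aux_sq {d : ℕ} (x : EuclideanSpace ℝ (Fin d)) (i : ℕ) (hi : 1 ≤ i) :
    ‖iteratedFDeriv ℝ i (fun y : EuclideanSpace ℝ (Fin d) => 1 + ‖y‖ ^ 2) x‖
      ≤ 2 ^ i * (1 + ‖x‖ ^ 2) * (jap x)⁻¹ ^ i := by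
  have hJ := jap_ge_one x
  have h0 := aux_affine (fun y : EuclideanSpace ℝ (Fin d) => ‖y‖ ^ 2) (contDiff_norm_sq ℝ)
    1 1 i hi x
  simp only [one_mul, abs_one] at h0
  rw [h0]
  have h1 := (innerSL ℝ (E := EuclideanSpace ℝ (Fin d))).norm_iteratedFDeriv_le_of_bilinear_of_le_one
    (f := fun y => y) (g := fun y => y) (N := ∞) contDiff_id contDiff_id x (n := i)
    (by exact_mod_cast le_top) (norm_innerSL_le ℝ)
  have e : (fun y : EuclideanSpace ℝ (Fin d) => ‖y‖ ^ 2) = fun y => innerSL ℝ y y := by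
    ext y; simp
  rw [e]
  refine h1.trans ?_
  calc _ ≤ ∑ j ∈ Finset.range (i + 1), (i.choose j : ℝ) * (jap x ^ 2 * (jap x)⁻¹ ^ i) := by
        apply Finset.sum_le_sum
        intro j hj
        have hji : j + (i - j) = i := by have := Finset.mem_range.1 hj; omega
        calc _ ≤ (i.choose j : ℝ) * (jap x * (jap x)⁻¹ ^ j) * (jap x * (jap x)⁻¹ ^ (i - j)) := by
              gcongr
              · exact aux_id x j
              · exact aux_id x (i - j)
          _ = (i.choose j : ℝ) * (jap x ^ 2 * (jap x)⁻¹ ^ (j + (i - j))) := by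
              rw [pow_add]; ring
          _ = _ := by rw [hji]
    _ = _ := by
      rw [← Finset.sum_mul, jap_sq, ← mul_assoc]
      congr 2
      exact_mod_cast Nat.sum_range_choose i

/-- Formula (4.22): the uniform symbol estimates `‖D^n (f_E^s)(x)‖ ≤ C f_E(x)^s ⟨x⟩^{-n}`,
i.e. `f_E^s ∈ S_unif(f_E^s, g_E)` with seminorms uniform in `E ≥ 0`. -/
theorem stmt_19 (d : ℕ) (hd : 1 ≤ d) (μ κ₀ : ℝ)
    (hμ0 : 0 < μ) (hμ2 : μ < 2) (hκ₀ : 0 < κ₀) :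
    ∀ s : ℝ, ∀ n : ℕ, ∃ C > (0:ℝ), ∀ E : ℝ, 0 ≤ E → ∀ x : EuclideanSpace ℝ (Fin d),
      ‖iteratedFDeriv ℝ n (fun y => fE μ κ₀ E y ^ s) x‖ ≤
        C * fE μ κ₀ E x ^ s * jap x ^ (-(n:ℝ)) := by
  intro s n
  have hq : ContDiff ℝ ∞ (fun y : EuclideanSpace ℝ (Fin d) => 1 + ‖y‖ ^ 2) :=
    contDiff_const.add (contDiff_norm_sq ℝ)
  have hqpos : ∀ y : EuclideanSpace ℝ (Fin d), 0 < 1 + ‖y‖ ^ 2 := fun y => by positivity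
  set v : EuclideanSpace ℝ (Fin d) → ℝ := fun y => (1 + ‖y‖ ^ 2) ^ (-μ / 2) with hv
  have hvs : ContDiff ℝ ∞ v := aux_rpow_smooth _ hq hqpos _
  have hvpos : ∀ y, 0 < v y := fun y => Real.rpow_pos_of_pos (hqpos y) _
  have hjv : ∀ y : EuclideanSpace ℝ (Fin d), jap y ^ (-μ) = v y := fun y => by
    rw [jap, Real.sqrt_eq_rpow, ← Real.rpow_mul (hqpos y).le]
    congr 1; ring
  -- uniform constants for `v`
  choose c hc1 hc using fun i : ℕ => aux_rpow (-μ / 2) i (2 ^ i) (one_le_pow₀ (by norm_num))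
  have hvb : ∀ i (x : EuclideanSpace ℝ (Fin d)),
      ‖iteratedFDeriv ℝ i v x‖ ≤ c i * v x * (jap x)⁻¹ ^ i := by
    intro i x
    have hJ := jap_ge_one x
    refine hc i _ hq hqpos x (jap x) (by positivity) ?_
    intro k hk1 hk
    refine (aux_sq x k hk1).trans ?_
    gcongr
    norm_num
  have hc0 : ∀ i, 0 ≤ c i := fun i => zero_le_one.trans (hc1 i)
  set K : ℝ := ∑ i ∈ Finset.range (n + 1), c i with hKdef
  have hcK : ∀ i ≤ n, c i ≤ K := fun i hi =>
    Finset.single_le_sum (f := c) (fun k _ => hc0 k) (Finset.mem_range.2 (by omega))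
  have hK : 1 ≤ K := (hc1 0).trans (hcK 0 (Nat.zero_le _))
  obtain ⟨C, hC1, hC⟩ := aux_rpow (s / 2) n K hK
  refine ⟨C, by linarith, ?_⟩
  intro E hE x
  have hJ := jap_ge_one x
  have hm : 0 < (1 - μ / 2)⁻¹ := inv_pos.2 (by linarith)
  set b := (1 - μ / 2)⁻¹ with hb
  set a := (κ₀ ^ 2)⁻¹ * E with ha
  have ha0 : 0 ≤ a := by positivity
  have hupos : ∀ y, 0 < a + b * v y := fun y => by have := hvpos y; positivity
  have hus : ContDiff ℝ ∞ (fun y => a + b * v y) :=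
    contDiff_const.add (contDiff_const.mul hvs)
  have hf : ∀ y : EuclideanSpace ℝ (Fin d), fE μ κ₀ E y ^ s = (a + b * v y) ^ (s / 2) := by
    intro y
    rw [fE, hjv, Real.sqrt_eq_rpow, ← Real.rpow_mul (hupos y).le]
    congr 1; ring
  have := hC (fun y => a + b * v y) hus hupos x (jap x) (by positivity) ?_
  · simp_rw [hf]
    refine this.trans (le_of_eq ?_)
    rw [Real.rpow_neg (by positivity), Real.rpow_natCast, inv_pow]
  · intro i hi1 hi
    rw [aux_affine v hvs _ _ i hi1, abs_of_pos hm]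
    have hvx := hvpos x
    calc _ ≤ b * (c i * v x * (jap x)⁻¹ ^ i) := by gcongr; exact hvb i x
      _ = c i * (b * v x) * (jap x)⁻¹ ^ i := by ring
      _ ≤ K * (a + b * v x) * (jap x)⁻¹ ^ i := by
        gcongr
        · exact hcK i hi
        · linarith
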